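/- Let G = K_{m,n} be the complete bipartite graph with vertex partition [m] ∪ [n], so that I(G) = (x_1,…,x_m)(y_1,…,y_n) in S = K[x_1,…,x_m,y_1,…,y_n]. Then all squarefree powers of I(G) have minimum depth: for every k with 1 ≤ k ≤ ν(G) = min(m,n), one has depth(S/I(G)^{[k]}) = 2k − 1. -/

import Mathlib

open MvPolynomial

section Preamble

variable (K : Type*) [Field K] {σ : Type*} [Fintype σ] [DecidableEq σ]

/-- A (monic) monomial of the polynomial ring. -/
def IsMonomial (f : MvPolynomial σ K) : Prop :=
  ∃ d : σ →₀ ℕ, f = monomial d 1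

/-- An ideal generated by monomials. -/
def IsMonomialIdeal (I : Ideal (MvPolynomial σ K)) : Prop :=
  ∃ A : Set (MvPolynomial σ K), (∀ u ∈ A, IsMonomial K u) ∧ I = Ideal.span A

/-- The unique minimal set of monomial generators `G(I)` of a monomial ideal:
the monomials of `I` that are minimal with respect to divisibility. -/
def minGens (I : Ideal (MvPolynomial σ K)) : Set (MvPolynomial σ K) :=
  {u | IsMonomial K u ∧ u ∈ I ∧ ∀ v, IsMonomial K v → v ∈ I → v ∣ u → v = u}

/-- A squarefree monomial ideal. -/
def IsSqfreeMonomialIdeal (I : Ideal (MvPolynomial σ K)) : Prop :=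
  IsMonomialIdeal K I ∧ ∀ u ∈ minGens K I, Squarefree u

/-- The `k`-th squarefree power `I^{[k]}`: the ideal generated by the squarefree
products of `k` minimal monomial generators of `I`. -/
noncomputable def sqPow (I : Ideal (MvPolynomial σ K)) (k : ℕ) : Ideal (MvPolynomial σ K) :=
  Ideal.span {u | Squarefree u ∧ ∃ l : List (MvPolynomial σ K),
    l.length = k ∧ (∀ f ∈ l, f ∈ minGens K I) ∧ u = l.prod}

/-- `ν(I)`: the maximum length of a regular sequence of monomials in `I`. -/
noncomputable def monNu (I : Ideal (MvPolynomial σ K)) : ℕ :=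
  sSup {m | ∃ l : List (MvPolynomial σ K), l.length = m ∧
    (∀ f ∈ l, IsMonomial K f ∧ f ∈ I) ∧
    RingTheory.Sequence.IsRegular (MvPolynomial σ K) l}

/-- The minimal degree `d` of a minimal monomial generator of `I`
(so `d_k = minDeg (I^{[k]})`). -/
noncomputable def minDeg (I : Ideal (MvPolynomial σ K)) : ℕ :=
  sInf (totalDegree '' minGens K I)

/-- `depth(S/I)`: the maximum length of an `S/I`-regular sequence of elements of
the graded maximal ideal `(x_1, …, x_n)`. -/
noncomputable def qdepth (I : Ideal (MvPolynomial σ K)) : ℕ :=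
  sSup {m | ∃ l : List (MvPolynomial σ K), l.length = m ∧
    (∀ f ∈ l, f ∈ Ideal.span (Set.range (X : σ → MvPolynomial σ K))) ∧
    RingTheory.Sequence.IsRegular (MvPolynomial σ K ⧸ I) l}

/-- `I` has linear quotients with respect to the ordering `L` of its minimal
monomial generators: each successive colon ideal is generated by variables. -/
def HasLinearQuotientsOrder (I : Ideal (MvPolynomial σ K))
    (L : List (MvPolynomial σ K)) : Prop :=
  L.Nodup ∧ (∀ u, u ∈ L ↔ u ∈ minGens K I) ∧
  ∀ i : Fin L.length, 0 < (i : ℕ) →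
    ∃ A : Set σ,
      Submodule.colon (Ideal.span {u | u ∈ L.take (i : ℕ)}) (Ideal.span {L.get i})
        = Ideal.span (X '' A)

/-- A monomial ideal with linear quotients. -/
def HasLinearQuotients (I : Ideal (MvPolynomial σ K)) : Prop :=
  ∃ L, HasLinearQuotientsOrder K I L

/-- A polymatroidal ideal: a monomial ideal generated in a single degree whose
minimal generators satisfy the exchange property. -/
def IsPolymatroidal (I : Ideal (MvPolynomial σ K)) : Prop :=
  IsMonomialIdeal K I ∧
  (∃ d, ∀ u ∈ minGens K I, totalDegree u = d) ∧
  ∀ u ∈ minGens K I, ∀ v ∈ minGens K I, ∀ k : σ,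
    degreeOf k v < degreeOf k u →
    ∃ l : σ, degreeOf l u < degreeOf l v ∧
      ∃ w, u = X k * w ∧ X l * w ∈ minGens K I

/-- A matroidal ideal: a polymatroidal ideal all of whose minimal generators are
squarefree. -/
def IsMatroidal (I : Ideal (MvPolynomial σ K)) : Prop :=
  IsPolymatroidal K I ∧ ∀ u ∈ minGens K I, Squarefree u

/-- The squarefree part of a monomial ideal: the ideal generated by its squarefree
minimal generators. -/
noncomputable def sqfPart (I : Ideal (MvPolynomial σ K)) : Ideal (MvPolynomial σ K) :=
  Ideal.span {u | u ∈ minGens K I ∧ Squarefree u}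

/-- The squarefree Veronese ideal `𝔪^{[d]}`, generated by all squarefree
monomials of degree `d`. -/
noncomputable def veronese (d : ℕ) : Ideal (MvPolynomial σ K) :=
  Ideal.span {u | ∃ F : Finset σ, F.card = d ∧ u = ∏ i ∈ F, X i}

/-- A chordal graph: no induced cycle of length greater than 3. -/
def IsChordal {V : Type*} (G : SimpleGraph V) : Prop :=
  ∀ m : ℕ, 4 ≤ m → ¬ ∃ f : ZMod m → V, Function.Injective f ∧
    ∀ i j : ZMod m, G.Adj (f i) (f j) ↔ (i = j + 1 ∨ j = i + 1)

/-- A matching of `G`: a finite set of pairwise vertex-disjoint edges of `G`. -/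
def IsMatching (G : SimpleGraph σ) (M : Finset (Sym2 σ)) : Prop :=
  (↑M ⊆ G.edgeSet) ∧ (M : Set (Sym2 σ)).Pairwise fun e f => ∀ v, v ∈ e → v ∉ f

/-- A `k`-matching of `G`. -/
def IsKMatching (G : SimpleGraph σ) (M : Finset (Sym2 σ)) (k : ℕ) : Prop :=
  IsMatching G M ∧ M.card = k

/-- The vertex set `V(M)` of a matching. -/
def mVerts (M : Finset (Sym2 σ)) : Finset σ :=
  Finset.univ.filter fun v => ∃ e ∈ M, v ∈ e

/-- The squarefree monomial `∏_{v ∈ V(M)} x_v` attached to a matching. -/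
noncomputable def matchMon (M : Finset (Sym2 σ)) : MvPolynomial σ K :=
  ∏ v ∈ mVerts M, X v

/-- The edge ideal `I(G)` of a finite simple graph `G`. -/
noncomputable def edgeIdeal (G : SimpleGraph σ) : Ideal (MvPolynomial σ K) :=
  Ideal.span {u | ∃ i j, G.Adj i j ∧ u = X i * X j}

/-- The `k`-th squarefree power `I(G)^{[k]}` of the edge ideal, generated by the
monomials `∏_{v ∈ V(M)} x_v` of the `k`-matchings `M` of `G`. -/
noncomputable def matchPow (G : SimpleGraph σ) (k : ℕ) : Ideal (MvPolynomial σ K) :=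
  Ideal.span {u | ∃ M : Finset (Sym2 σ), IsKMatching G M k ∧ u = matchMon K M}

/-- The matching number `ν(G)`. -/
noncomputable def matchNum (G : SimpleGraph σ) : ℕ :=
  sSup {k | ∃ M : Finset (Sym2 σ), IsKMatching G M k}

end Preamble

/-!
Let `A` and `B` be the two parts of the complete bipartite graph. A set `F` of vertices contains a
`k`-matching iff `|F ∩ A| ≥ k` and `|F ∩ B| ≥ k`, so `I(G)^{[k]}` is the Stanley–Reisner ideal of
the union of `P = {F : |F ∩ A| ≤ k - 1}` and `Q = {F : |F ∩ B| ≤ k - 1}`. The complexes `P`, `Q`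
and `P ∩ Q` are joins of skeleta of the simplices on `A` and `B`. Joining with the skeleton of the
simplex on `A` whose faces have at most `a` elements raises the depth by `min a |A|`: this follows
by induction on `|A|`, comparing the link and the deletion of a vertex `v` in the exact sequence
`0 → S/(I : x_v) → S/I → S/(I + (x_v)) → 0`. Hence `P ∩ Q` has depth `2k - 2`, while `P` and `Q`
have depth at least `2k - 1`, and the Mayer–Vietoris sequence of `P ∪ Q` gives depth `2k - 1`.
Depth is read off as the degree of the first nonvanishing `Ext`, which by Rees' theorem is the
length of the longest regular sequences.
-/

section Grade

open CategoryTheory Abelian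

universe w v u

section AbelianCategory

variable {C : Type u} [Category.{v} C] [Abelian C] [HasExt.{w} C] {X Y : C} {d : ℕ}

/-- The grade of `Y` with respect to `X` is at least `d`, that is, `Extⁱ(X, Y) = 0` for `i < d`. For
`X = R ⧸ J` the grade is the depth of the `R`-module `Y` in the ideal `J`. -/
def HasGradeGE (X Y : C) (d : ℕ) : Prop :=
  ∀ i < d, Subsingleton (Ext X Y i)

/-- The grade of `Y` with respect to `X` is `d`: the first nonzero `Extⁱ(X, Y)` is the one in
degree `i = d`. -/
def HasGrade (X Y : C) (d : ℕ) : Prop :=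
  HasGradeGE X Y d ∧ Nontrivial (Ext X Y d)

lemma HasGradeGE.mono {e : ℕ} (h : HasGradeGE X Y d) (hed : e ≤ d) : HasGradeGE X Y e :=
  fun i hi => h i (hi.trans_le hed)

lemma hasGrade_self_zero [Nontrivial (X ⟶ X)] : HasGrade X X 0 :=
  ⟨fun _ hi => absurd hi (Nat.not_lt_zero _), Ext.homEquiv₀.nontrivial⟩

variable {S : ShortComplex C}

lemma HasGradeGE.middle (hS : S.ShortExact) (h₁ : HasGradeGE X S.X₁ d) (h₃ : HasGradeGE X S.X₃ d) :
    HasGradeGE X S.X₂ d := by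
  intro i hi
  have := h₁ i hi
  have := h₃ i hi
  refine subsingleton_of_forall_eq 0 fun x => ?_
  obtain ⟨y, rfl⟩ := Ext.covariant_sequence_exact₂ X hS x (Subsingleton.elim _ _)
  rw [Subsingleton.elim y 0, Ext.zero_comp]

lemma ext_eq_zero_of_comp_f_eq_zero (hS : S.ShortExact) (h₃ : HasGradeGE X S.X₃ d)
    {i : ℕ} (hi : i < d + 1) (x : Ext X S.X₁ i)
    (hx : x.comp (Ext.mk₀ S.f) (add_zero i) = 0) : x = 0 := by
  rcases i with _ | i
  · have := hS.mono_f
    exact Ext.postcomp_mk₀_injective_of_mono X S.f (by simpa using hx)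
  · have := h₃ i (Nat.succ_lt_succ_iff.1 hi)
    obtain ⟨y, rfl⟩ := Ext.covariant_sequence_exact₁ X hS x hx rfl
    rw [Subsingleton.elim y 0, Ext.zero_comp]

lemma HasGrade.middle (hS : S.ShortExact) (h₁ : HasGrade X S.X₁ d) (h₃ : HasGradeGE X S.X₃ d) :
    HasGrade X S.X₂ d := by
  refine ⟨h₁.1.middle hS h₃, not_subsingleton_iff_nontrivial.1 fun _ => ?_⟩
  obtain ⟨-, _⟩ := h₁
  obtain ⟨x, hx⟩ := exists_ne (0 : Ext X S.X₁ d)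
  exact hx (ext_eq_zero_of_comp_f_eq_zero hS h₃ d.lt_succ_self x (Subsingleton.elim _ _))

lemma HasGradeGE.left (hS : S.ShortExact) (h₂ : HasGradeGE X S.X₂ (d + 1))
    (h₃ : HasGradeGE X S.X₃ d) : HasGradeGE X S.X₁ (d + 1) := by
  intro i hi
  have := h₂ i hi
  exact subsingleton_of_forall_eq 0 fun x =>
    ext_eq_zero_of_comp_f_eq_zero hS h₃ hi x (Subsingleton.elim _ _)

lemma HasGrade.left (hS : S.ShortExact) (h₂ : HasGradeGE X S.X₂ (d + 1)) (h₃ : HasGrade X S.X₃ d) :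
    HasGrade X S.X₁ (d + 1) := by
  refine ⟨h₂.left hS h₃.1, not_subsingleton_iff_nontrivial.1 fun _ => ?_⟩
  obtain ⟨-, _⟩ := h₃
  obtain ⟨x, hx⟩ := exists_ne (0 : Ext X S.X₃ d)
  obtain ⟨y, rfl⟩ := Ext.covariant_sequence_exact₃ X hS x rfl (Subsingleton.elim _ _)
  have := h₂ d d.lt_succ_self
  exact hx (by rw [Subsingleton.elim y 0, Ext.zero_comp])

end AbelianCategory

section Module

variable {R : Type u} [CommRing R] [Small.{v} R] {N : ModuleCat.{v} R} {d : ℕ}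

lemma HasGradeGE.prod {A B : Type v} [AddCommGroup A] [Module R A] [AddCommGroup B] [Module R B]
    (hA : HasGradeGE N (ModuleCat.of R A) d) (hB : HasGradeGE N (ModuleCat.of R B) d) :
    HasGradeGE N (ModuleCat.of R (A × B)) d := by
  have exact_inl_snd : Function.Exact (LinearMap.inl R A B) (LinearMap.snd R A B) :=
    LinearMap.exact_iff.2 (LinearMap.range_inl R A B).symm
  exact HasGradeGE.middle (ModuleCat.shortComplex_shortExact
    (ModuleCat.shortComplexOfCompEqZero _ _ exact_inl_snd.linearMap_comp_eq_zero) exact_inl_snd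
    LinearMap.inl_injective LinearMap.snd_surjective) hA hB

lemma ext_comp_mk₀_smul_eq_zero {A B : ModuleCat.{v} R} {a : R} (ha : a ∈ Module.annihilator R N)
    {i : ℕ} (x : Ext N A i) (g : A ⟶ B) : x.comp (Ext.mk₀ (a • g)) (add_zero i) = 0 := by
  have smul_id_eq_zero : x.comp (Ext.mk₀ (a • 𝟙 A)) (add_zero i) = 0 :=
    congrArg (·.hom x) (Ext.postcomp_smul_id_eq_zero_of_mem_annihilator (M := A) ha i)
  simpa [Ext.mk₀_smul] using congrArg (·.comp (Ext.mk₀ g) (add_zero i)) smul_id_eq_zero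

end Module

section MayerVietoris

variable {R : Type u} [Ring R] {M : Type v} [AddCommGroup M] [Module R M] (P Q : Submodule R M)

/-- The diagonal map of the Mayer–Vietoris sequence
`0 → M ⧸ (P ⊓ Q) → M ⧸ P × M ⧸ Q → M ⧸ (P ⊔ Q) → 0`. -/
def quotInfToProd : M ⧸ (P ⊓ Q) →ₗ[R] (M ⧸ P) × (M ⧸ Q) :=
  (P ⊓ Q).liftQ (P.mkQ.prod Q.mkQ) (by simp [LinearMap.ker_prod])

/-- The difference map of the Mayer–Vietoris sequence
`0 → M ⧸ (P ⊓ Q) → M ⧸ P × M ⧸ Q → M ⧸ (P ⊔ Q) → 0`. -/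
def quotProdToSup : (M ⧸ P) × (M ⧸ Q) →ₗ[R] M ⧸ (P ⊔ Q) :=
  (Submodule.factor le_sup_left).coprod (-Submodule.factor le_sup_right)

lemma quotInfToProd_injective : Function.Injective (quotInfToProd P Q) :=
  LinearMap.ker_eq_bot.1 (Submodule.ker_liftQ_eq_bot _ _ _ (by simp [LinearMap.ker_prod]))

lemma quotProdToSup_surjective : Function.Surjective (quotProdToSup P Q) := fun x => by
  obtain ⟨y, rfl⟩ := Submodule.factor_surjective (le_sup_left : P ≤ P ⊔ Q) x
  exact ⟨(y, 0), by simp [quotProdToSup]⟩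

lemma exact_quotInfToProd_quotProdToSup :
    Function.Exact (quotInfToProd P Q) (quotProdToSup P Q) := by
  refine fun x => ⟨fun hx => ?_, ?_⟩
  · obtain ⟨x, y⟩ := x
    obtain ⟨x, rfl⟩ := P.mkQ_surjective x
    obtain ⟨y, rfl⟩ := Q.mkQ_surjective y
    have x_sub_y_mem : x - y ∈ P ⊔ Q := by
      simpa [quotProdToSup, ← sub_eq_add_neg, sub_eq_zero, Submodule.Quotient.eq] using hx
    obtain ⟨p, hp, q, hq, hpq⟩ := Submodule.mem_sup.1 x_sub_y_mem
    have x_sub_p_eq : x - p = y + q := by rw [sub_eq_iff_eq_add, add_assoc, add_comm q, hpq]; abel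
    refine ⟨Submodule.Quotient.mk (x - p), Prod.ext ?_ ?_⟩
    · simpa [quotInfToProd] using hp
    · simpa [quotInfToProd, x_sub_p_eq] using hq
  · rintro ⟨x, rfl⟩
    obtain ⟨x, rfl⟩ := (P ⊓ Q).mkQ_surjective x
    simp [quotInfToProd, quotProdToSup]

end MayerVietoris

section Colon

variable {R : Type u} [CommRing R] {M : Type v} [AddCommGroup M] [Module R M]
  (P : Submodule R M) (x : M)

lemma comap_toSpanSingleton_eq_colon :
    P.comap (LinearMap.toSpanSingleton R M x) = P.colon {x} := by
  ext; simp [Submodule.mem_colon_singleton]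

/-- The first map of the exact sequence `0 → R ⧸ (P : x) → M ⧸ P → M ⧸ (P + R x) → 0`, sending the
class of `r` to the class of `r • x`. -/
noncomputable def quotColonSMul : (R ⧸ P.colon {x}) →ₗ[R] M ⧸ P :=
  Submodule.mapQ (P.colon {x}) P (LinearMap.toSpanSingleton R M x)
    (comap_toSpanSingleton_eq_colon P x).ge

lemma quotColonSMul_injective : Function.Injective (quotColonSMul P x) := by
  rw [← LinearMap.ker_eq_bot, quotColonSMul, Submodule.ker_mapQ, comap_toSpanSingleton_eq_colon,
    Submodule.mkQ_map_self]

lemma exact_quotColonSMul_factor :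
    Function.Exact (quotColonSMul P x) (Submodule.factor (le_sup_left : P ≤ P ⊔ R ∙ x)) := by
  rw [LinearMap.exact_iff, quotColonSMul, Submodule.range_mapQ, Submodule.factor,
    Submodule.ker_mapQ, LinearMap.range_toSpanSingleton, Submodule.comap_id, Submodule.map_sup,
    Submodule.mkQ_map_self, bot_sup_eq]

end Colon

section Ideal

variable {R : Type u} [CommRing R] {N : ModuleCat.{u} R} {d : ℕ} {J : Ideal R} {a : R}

lemma colon_shortExact (J : Ideal R) (a : R) :
    (ModuleCat.shortComplexOfCompEqZero _ _
      (exact_quotColonSMul_factor J a).linearMap_comp_eq_zero).ShortExact :=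
  ModuleCat.shortComplex_shortExact _ (exact_quotColonSMul_factor J a)
    (quotColonSMul_injective J a) (Submodule.factor_surjective le_sup_left)

lemma mayerVietoris_shortExact {M : Type u} [AddCommGroup M] [Module R M] (P Q : Submodule R M) :
    (ModuleCat.shortComplexOfCompEqZero _ _
      (exact_quotInfToProd_quotProdToSup P Q).linearMap_comp_eq_zero).ShortExact :=
  ModuleCat.shortComplex_shortExact _ (exact_quotInfToProd_quotProdToSup P Q)
    (quotInfToProd_injective P Q) (quotProdToSup_surjective P Q)

lemma HasGrade.of_colon (h : HasGrade N (ModuleCat.of R (R ⧸ J.colon {a})) d)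
    (hsup : HasGradeGE N (ModuleCat.of R (R ⧸ J ⊔ Ideal.span {a})) d) :
    HasGrade N (ModuleCat.of R (R ⧸ J)) d :=
  h.middle (colon_shortExact J a) hsup

lemma HasGrade.of_colon_eq_self (ha : a ∈ Module.annihilator R N) (hJ : J.colon {a} = J)
    (h : HasGrade N (ModuleCat.of R (R ⧸ J ⊔ Ideal.span {a})) d) :
    HasGrade N (ModuleCat.of R (R ⧸ J)) (d + 1) := by
  have quotColonSMul_eq :
      ModuleCat.ofHom (quotColonSMul J a) = a • ModuleCat.ofHom (Submodule.factor hJ.le) := by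
    ext; exact congrArg J.mkQ (mul_comm 1 a)
  have comp_quotColonSMul_eq_zero {i : ℕ} (x : Ext N (ModuleCat.of R (R ⧸ J.colon {a})) i) :
      x.comp (Ext.mk₀ (ModuleCat.ofHom (quotColonSMul J a))) (add_zero i) = 0 := by
    rw [quotColonSMul_eq, ext_comp_mk₀_smul_eq_zero ha]
  have colon_gradeGE : HasGradeGE N (ModuleCat.of R (R ⧸ J.colon {a})) (d + 1) :=
    fun i hi => subsingleton_of_forall_eq 0 fun x =>
      ext_eq_zero_of_comp_f_eq_zero (colon_shortExact J a) h.1 hi x (comp_quotColonSMul_eq_zero x)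
  have colon_grade : HasGrade N (ModuleCat.of R (R ⧸ J.colon {a})) (d + 1) :=
    HasGrade.left (colon_shortExact J a) (hJ ▸ colon_gradeGE) h
  rwa [hJ] at colon_grade

lemma HasGrade.quotient_inf {M : Type u} [AddCommGroup M] [Module R M] {P Q : Submodule R M}
    (hP : HasGradeGE N (ModuleCat.of R (M ⧸ P)) (d + 1))
    (hQ : HasGradeGE N (ModuleCat.of R (M ⧸ Q)) (d + 1))
    (hsup : HasGrade N (ModuleCat.of R (M ⧸ P ⊔ Q)) d) :
    HasGrade N (ModuleCat.of R (M ⧸ P ⊓ Q)) (d + 1) :=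
  HasGrade.left (mayerVietoris_shortExact P Q) (hP.prod hQ) hsup

-- This is Rees' theorem.
lemma HasGrade.isGreatest_isRegular_length [IsNoetherianRing R] {M : Type u} [AddCommGroup M]
    [Module R M] [Module.Finite R M] (hM : J • (⊤ : Submodule R M) < ⊤)
    (h : HasGrade (ModuleCat.of R (R ⧸ J)) (ModuleCat.of R M) d) :
    IsGreatest {m | ∃ l : List R, l.length = m ∧ (∀ f ∈ l, f ∈ J) ∧
      RingTheory.Sequence.IsRegular M l} d := by
  have support_eq : Module.support R (R ⧸ J) = PrimeSpectrum.zeroLocus J := by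
    rw [Module.support_eq_zeroLocus, Ideal.annihilator_quotient]
  refine ⟨ModuleCat.exists_isRegular_of_exists_subsingleton_ext J d (ModuleCat.of R M) hM
    (ModuleCat.of R (R ⧸ J)) support_eq h.1, ?_⟩
  rintro _ ⟨l, rfl, hl, hreg⟩
  by_contra! hlt
  have := ModuleCat.subsingleton_ext_of_exists_isRegular J (ModuleCat.of R (R ⧸ J))
    support_eq.subset (ModuleCat.of R M) hM l hl hreg d hlt
  exact not_nontrivial _ h.2

end Ideal

end Grade

/-- A simplicial complex on the vertex set `σ`, as the lower set of its faces. The empty face is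
included (unless the complex is void), and a vertex need not be a face. -/
abbrev FaceComplex (σ : Type*) := LowerSet (Finset σ)

namespace FaceComplex

variable {σ : Type*} {R : Type*} [CommRing R] {Δ Γ : FaceComplex σ} {v : σ} {F : Finset σ} {d : ℕ}

section StanleyReisner

variable (R) in
/-- The Stanley–Reisner ideal of `Δ`, consisting of the polynomials all of whose monomials have
their set of variables outside `Δ`. -/
noncomputable def stanleyReisner (Δ : FaceComplex σ) : Ideal (MvPolynomial σ R) :=
  restrictSupportIdeal R {d | d.support ∉ Δ} fun _ _ hde hd he =>
    hd (Δ.lower (Finsupp.support_mono hde) he)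

lemma mem_stanleyReisner {f : MvPolynomial σ R} :
    f ∈ Δ.stanleyReisner R ↔ ∀ d ∈ f.support, d.support ∉ Δ :=
  Iff.rfl

lemma monomial_mem_stanleyReisner {d : σ →₀ ℕ} (hd : d.support ∉ Δ) :
    monomial d 1 ∈ Δ.stanleyReisner R := by
  refine mem_stanleyReisner.2 fun e he => ?_
  rwa [Finset.mem_singleton.1 (support_monomial_subset he)]

lemma stanleyReisner_le {J : Ideal (MvPolynomial σ R)}
    (h : ∀ d : σ →₀ ℕ, d.support ∉ Δ → monomial d 1 ∈ J) : Δ.stanleyReisner R ≤ J := by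
  intro f hf
  rw [f.as_sum]
  refine J.sum_mem fun d hd => ?_
  rw [← mul_one (coeff d f), ← C_mul_monomial]
  exact J.mul_mem_left _ (h d (hf hd))

lemma stanleyReisner_anti (h : Δ ≤ Γ) : Γ.stanleyReisner R ≤ Δ.stanleyReisner R :=
  fun _ hf _ hd hΔ => hf hd (h hΔ)

lemma stanleyReisner_sup :
    (Δ ⊔ Γ).stanleyReisner R = Δ.stanleyReisner R ⊓ Γ.stanleyReisner R := by
  ext; simp [mem_stanleyReisner, forall_and, not_or]

lemma stanleyReisner_inf :
    (Δ ⊓ Γ).stanleyReisner R = Δ.stanleyReisner R ⊔ Γ.stanleyReisner R := by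
  refine le_antisymm (stanleyReisner_le fun d hd => ?_)
    (sup_le (stanleyReisner_anti inf_le_left) (stanleyReisner_anti inf_le_right))
  rcases not_and_or.1 hd with hΔ | hΓ
  · exact Ideal.mem_sup_left (monomial_mem_stanleyReisner hΔ)
  · exact Ideal.mem_sup_right (monomial_mem_stanleyReisner hΓ)

lemma stanleyReisner_Iic_empty :
    stanleyReisner R (LowerSet.Iic (∅ : Finset σ)) = idealOfVars σ R := by
  ext f
  rw [← pow_one (idealOfVars σ R), mem_pow_idealOfVars_iff]
  simp [mem_stanleyReisner, Nat.one_le_iff_ne_zero, Finsupp.degree_eq_zero_iff]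

lemma stanleyReisner_le_idealOfVars (h : ∅ ∈ Δ) : Δ.stanleyReisner R ≤ idealOfVars σ R :=
  stanleyReisner_Iic_empty (R := R) (σ := σ) ▸ stanleyReisner_anti (LowerSet.Iic_le.2 h)

lemma idealOfVars_ne_top [Nontrivial R] : idealOfVars σ R ≠ ⊤ := by
  rw [← stanleyReisner_Iic_empty, Ideal.ne_top_iff_one, mem_stanleyReisner]
  simp

end StanleyReisner

section Vertex

/-- The deletion of the vertex `v`: the faces of `Δ` that do not contain `v`. -/
def deletion (Δ : FaceComplex σ) (v : σ) : FaceComplex σ where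
  carrier := {F | F ∈ Δ ∧ v ∉ F}
  lower' _ _ hGF hF := ⟨Δ.lower hGF hF.1, fun hv => hF.2 (hGF hv)⟩

@[simp] lemma mem_deletion : F ∈ Δ.deletion v ↔ F ∈ Δ ∧ v ∉ F := Iff.rfl

lemma stanleyReisner_deletion (Δ : FaceComplex σ) (v : σ) :
    (Δ.deletion v).stanleyReisner R = Δ.stanleyReisner R ⊔ Ideal.span {X v} := by
  refine le_antisymm (stanleyReisner_le fun d hd => ?_) (sup_le ?_ ?_)
  · by_cases hv : v ∈ d.support
    · exact Ideal.mem_sup_right (Ideal.mem_span_singleton.2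
        (X_dvd_monomial.2 (.inr (Finsupp.mem_support_iff.1 hv))))
    · exact Ideal.mem_sup_left (monomial_mem_stanleyReisner fun hΔ => hd ⟨hΔ, hv⟩)
  · exact stanleyReisner_anti fun _ hF => hF.1
  · rw [Ideal.span_singleton_le_iff_mem]
    exact monomial_mem_stanleyReisner fun h => h.2 (by simp)

variable [DecidableEq σ]

/-- The closed star of the vertex `v`: the largest subcomplex of `Δ` that is a cone with apex `v`.
It is void when `v` is not a face. -/
def star (Δ : FaceComplex σ) (v : σ) : FaceComplex σ where
  carrier := {F | insert v F ∈ Δ}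
  lower' _ _ hFG := Δ.lower (Finset.insert_subset_insert v hFG)

/-- The link of the vertex `v`: the faces of the star of `v` that do not contain `v`. -/
def link (Δ : FaceComplex σ) (v : σ) : FaceComplex σ := (Δ.star v).deletion v

@[simp] lemma mem_star : F ∈ Δ.star v ↔ insert v F ∈ Δ := Iff.rfl

@[simp] lemma mem_link : F ∈ Δ.link v ↔ insert v F ∈ Δ ∧ v ∉ F := Iff.rfl

lemma star_star (Δ : FaceComplex σ) (v : σ) : (Δ.star v).star v = Δ.star v := by
  ext; simp

lemma stanleyReisner_star (Δ : FaceComplex σ) (v : σ) :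
    (Δ.star v).stanleyReisner R = (Δ.stanleyReisner R).colon {X v} := by
  ext f
  have support_add_single (d : σ →₀ ℕ) :
      (d + Finsupp.single v 1).support = insert v d.support := by
    ext w
    by_cases hw : w = v <;> simp [hw, eq_comm]
  simp [mem_stanleyReisner, Submodule.mem_colon_singleton, support_mul_X, support_add_single]

end Vertex

section Depth

variable (R) in
/-- The Stanley–Reisner ring of `Δ` over `R` has depth `d` in the ideal of the variables, expressed
through the vanishing of `Ext`. -/
def HasDepth (Δ : FaceComplex σ) (d : ℕ) : Prop :=
  HasGrade (ModuleCat.of (MvPolynomial σ R) (MvPolynomial σ R ⧸ idealOfVars σ R))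
    (ModuleCat.of (MvPolynomial σ R) (MvPolynomial σ R ⧸ Δ.stanleyReisner R)) d

lemma hasDepth_Iic_empty [Nontrivial R] : HasDepth R (LowerSet.Iic (∅ : Finset σ)) 0 := by
  have : Nontrivial (MvPolynomial σ R ⧸ idealOfVars σ R) :=
    Ideal.Quotient.nontrivial_iff.2 idealOfVars_ne_top
  rw [HasDepth, stanleyReisner_Iic_empty]
  have : Nontrivial (ModuleCat.of (MvPolynomial σ R) (MvPolynomial σ R ⧸ idealOfVars σ R) ⟶
      ModuleCat.of (MvPolynomial σ R) (MvPolynomial σ R ⧸ idealOfVars σ R)) :=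
    ModuleCat.homEquiv.nontrivial
  exact hasGrade_self_zero

lemma HasDepth.sup {e₁ e₂ : ℕ} (hΔ : HasDepth R Δ e₁) (hΓ : HasDepth R Γ e₂)
    (hinf : HasDepth R (Δ ⊓ Γ) d) (h₁ : d < e₁) (h₂ : d < e₂) : HasDepth R (Δ ⊔ Γ) (d + 1) := by
  rw [HasDepth, stanleyReisner_inf] at hinf
  rw [HasDepth, stanleyReisner_sup]
  exact HasGrade.quotient_inf (hΔ.1.mono h₁) (hΓ.1.mono h₂) hinf

lemma qdepth_stanleyReisner {K : Type*} [Field K] [Finite σ] (h : HasDepth K Δ d) (hΔ : ∅ ∈ Δ) :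
    qdepth K (Δ.stanleyReisner K) = d := by
  have smul_top_lt : idealOfVars σ K •
      (⊤ : Submodule (MvPolynomial σ K) (MvPolynomial σ K ⧸ Δ.stanleyReisner K)) < ⊤ := by
    refine lt_top_iff_ne_top.2 fun smul_top_eq => idealOfVars_ne_top (σ := σ) (R := K) ?_
    have comap_smul_top := Submodule.comap_smul_top_of_surjective (idealOfVars σ K) _
      (Submodule.mkQ_surjective (Δ.stanleyReisner K))
    simpa [smul_top_eq, stanleyReisner_le_idealOfVars hΔ] using comap_smul_top.symm
  exact (h.isGreatest_isRegular_length smul_top_lt).csSup_eq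

variable [DecidableEq σ]

lemma HasDepth.star (h : HasDepth R (Δ.link v) d) : HasDepth R (Δ.star v) (d + 1) := by
  refine HasGrade.of_colon_eq_self (a := X v) ?_ ?_ ?_
  · exact (Ideal.annihilator_quotient (I := idealOfVars σ R)).ge (Ideal.subset_span ⟨v, rfl⟩)
  · rw [← stanleyReisner_star, star_star]
  · rw [← stanleyReisner_deletion]
    exact h

lemma HasDepth.of_link_of_deletion {e : ℕ} (hlink : HasDepth R (Δ.link v) d)
    (hdel : HasDepth R (Δ.deletion v) e) (hde : d < e) : HasDepth R Δ (d + 1) := by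
  have hstar := hlink.star
  rw [HasDepth, stanleyReisner_star] at hstar
  rw [HasDepth, stanleyReisner_deletion] at hdel
  exact hstar.of_colon (hdel.1.mono hde)

end Depth

section JoinSkeleton

variable [DecidableEq σ]

/-- The join of the restriction of `Δ` to the complement of `A` with the `(a - 1)`-dimensional
skeleton of the simplex on `A`. -/
def joinSkeleton (Δ : FaceComplex σ) (A : Finset σ) (a : ℕ) : FaceComplex σ where
  carrier := {F | F \ A ∈ Δ ∧ (F ∩ A).card ≤ a}
  lower' _ _ hGF hF := ⟨Δ.lower (Finset.sdiff_subset_sdiff hGF subset_rfl) hF.1,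
    (Finset.card_le_card (Finset.inter_subset_inter_right hGF)).trans hF.2⟩

variable {A B : Finset σ} {a b : ℕ}

@[simp] lemma mem_joinSkeleton : F ∈ Δ.joinSkeleton A a ↔ F \ A ∈ Δ ∧ (F ∩ A).card ≤ a := Iff.rfl

lemma joinSkeleton_empty : Δ.joinSkeleton ∅ a = Δ := by
  ext; simp

lemma joinSkeleton_zero (hA : ∀ F ∈ Δ, Disjoint F A) : Δ.joinSkeleton A 0 = Δ := by
  ext F
  simp only [mem_joinSkeleton, SetLike.mem_coe, Nat.le_zero, Finset.card_eq_zero,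
    ← Finset.disjoint_iff_inter_eq_empty]
  refine ⟨fun ⟨hF, hFA⟩ => ?_, fun hF => ⟨?_, hA F hF⟩⟩
  · rwa [Finset.sdiff_eq_self_of_disjoint hFA] at hF
  · rwa [Finset.sdiff_eq_self_of_disjoint (hA F hF)]

lemma notMem_of_mem_joinSkeleton (hΔ : ∀ F ∈ Δ, v ∉ F) (hv : v ∉ A)
    (hF : F ∈ Δ.joinSkeleton A a) : v ∉ F :=
  fun hvF => hΔ _ hF.1 (Finset.mem_sdiff.2 ⟨hvF, hv⟩)

lemma deletion_joinSkeleton_insert (hΔ : ∀ F ∈ Δ, v ∉ F) (hv : v ∉ A) :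
    (Δ.joinSkeleton (insert v A) a).deletion v = Δ.joinSkeleton A a := by
  ext F
  by_cases hvF : v ∈ F
  · exact iff_of_false (fun hF => hF.2 hvF)
      fun hF => notMem_of_mem_joinSkeleton hΔ hv hF hvF
  · simp [hvF, Finset.sdiff_insert_of_notMem, Finset.inter_insert_of_notMem]

lemma link_joinSkeleton_insert (hΔ : ∀ F ∈ Δ, v ∉ F) (hv : v ∉ A) :
    (Δ.joinSkeleton (insert v A) (a + 1)).link v = Δ.joinSkeleton A a := by
  ext F
  by_cases hvF : v ∈ F
  · exact iff_of_false (fun hF => hF.2 hvF)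
      fun hF => notMem_of_mem_joinSkeleton hΔ hv hF hvF
  · simp [hvF, hv, Finset.sdiff_insert_of_notMem]

lemma star_joinSkeleton_of_card_le (hv : v ∈ A) (hA : A.card ≤ a) :
    (Δ.joinSkeleton A a).star v = Δ.joinSkeleton A a := by
  have card_inter_le (F : Finset σ) : (F ∩ A).card ≤ a :=
    (Finset.card_le_card Finset.inter_subset_right).trans hA
  ext F
  simp only [SetLike.mem_coe, mem_star, mem_joinSkeleton, card_inter_le,
    Finset.insert_sdiff_of_mem _ hv]

theorem HasDepth.joinSkeleton (h : HasDepth R Δ d) (hA : ∀ F ∈ Δ, Disjoint F A) (a : ℕ) :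
    HasDepth R (Δ.joinSkeleton A a) (d + min a A.card) := by
  induction A using Finset.induction_on generalizing a with
  | empty => simpa [joinSkeleton_empty] using h
  | insert v A hv ih =>
    rcases a with _ | a
    · simpa [joinSkeleton_zero hA] using h
    simp only [Finset.disjoint_insert_right, imp_and, forall_and] at hA
    obtain ⟨hvΔ, hA⟩ := hA
    have hlink : HasDepth R ((Δ.joinSkeleton (insert v A) (a + 1)).link v) (d + min a A.card) := by
      rw [link_joinSkeleton_insert hvΔ hv]
      exact ih hA a
    rw [Finset.card_insert_of_notMem hv, Nat.add_min_add_right, ← add_assoc]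
    rcases lt_or_ge a A.card with ha | ha
    · have hdel := ih hA (a + 1)
      rw [← deletion_joinSkeleton_insert hvΔ hv] at hdel
      exact hlink.of_link_of_deletion hdel (by omega)
    · have hcard : (insert v A).card ≤ a + 1 := (Finset.card_insert_le v A).trans (by omega)
      have hstar := hlink.star
      rwa [star_joinSkeleton_of_card_le (Finset.mem_insert_self v A) hcard] at hstar

end JoinSkeleton

section CardLE

variable [DecidableEq σ] {A B : Finset σ} {a b : ℕ}

/-- The complex of all sets with at most `a` elements in `A`. -/
def cardLE (A : Finset σ) (a : ℕ) : FaceComplex σ where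
  carrier := {F | (F ∩ A).card ≤ a}
  lower' _ _ hGF hF := (Finset.card_le_card (Finset.inter_subset_inter_right hGF)).trans hF

@[simp] lemma mem_cardLE : F ∈ cardLE A a ↔ (F ∩ A).card ≤ a := Iff.rfl

lemma cardLE_eq_top (h : A.card ≤ a) : cardLE A a = ⊤ :=
  eq_top_iff.2 fun _ _ => (Finset.card_le_card Finset.inter_subset_right).trans h

lemma joinSkeleton_joinSkeleton_Iic_empty [Fintype σ] (hAB : IsCompl A B) :
    joinSkeleton (joinSkeleton (LowerSet.Iic ∅) B b) A a = cardLE A a ⊓ cardLE B b := by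
  ext F
  have sdiff_eq_inter : F \ A = F ∩ B := by
    rw [Finset.sdiff_eq_inter_compl, hAB.compl_eq]
  simp only [SetLike.mem_coe, mem_joinSkeleton, sdiff_eq_inter]
  simp [and_comm]

lemma hasDepth_cardLE_inf_cardLE [Nontrivial R] [Fintype σ] (hAB : IsCompl A B) (a b : ℕ) :
    HasDepth R (cardLE A a ⊓ cardLE B b) (min a A.card + min b B.card) := by
  rw [← joinSkeleton_joinSkeleton_Iic_empty hAB]
  have hB : HasDepth R (joinSkeleton (LowerSet.Iic ∅) B b) (min b B.card) := by
    simpa using hasDepth_Iic_empty.joinSkeleton (R := R) (A := B) (by simp) b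
  rw [add_comm]
  refine hB.joinSkeleton (fun F hF => ?_) a
  have hFB : F ⊆ B := by simpa [Finset.sdiff_eq_empty_iff_subset] using hF.1
  exact hAB.disjoint.symm.mono_left hFB

lemma hasDepth_cardLE_sup_cardLE [Nontrivial R] [Fintype σ] (hAB : IsCompl A B)
    (ha : a < A.card) (hb : b < B.card) : HasDepth R (cardLE A a ⊔ cardLE B b) (a + b + 1) := by
  have hA : HasDepth R (cardLE A a) (a + B.card) := by
    simpa [cardLE_eq_top, ha.le] using hasDepth_cardLE_inf_cardLE (R := R) hAB a B.card
  have hB : HasDepth R (cardLE B b) (A.card + b) := by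
    simpa [cardLE_eq_top, hb.le] using hasDepth_cardLE_inf_cardLE (R := R) hAB A.card b
  have hinf : HasDepth R (cardLE A a ⊓ cardLE B b) (a + b) := by
    simpa [ha.le, hb.le] using hasDepth_cardLE_inf_cardLE (R := R) hAB a b
  exact hA.sup hB hinf (by omega) (by omega)

end CardLE

end FaceComplex

section Matching

open FaceComplex

variable {σ : Type*} {G : SimpleGraph σ} {k : ℕ}

lemma isKMatching_image_pair [DecidableEq σ] {ι : Type*} [Fintype ι] {f g : ι → σ}
    (hf : f.Injective) (hg : g.Injective) (hfg : ∀ i j, f i ≠ g j) (hadj : ∀ i, G.Adj (f i) (g i)) :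
    IsKMatching G (Finset.univ.image fun i => s(f i, g i)) (Fintype.card ι) := by
  have eq_of_mem_of_mem (v : σ) (i j : ι) (hi : v ∈ s(f i, g i)) (hj : v ∈ s(f j, g j)) :
      i = j := by
    rcases Sym2.mem_iff.1 hi with rfl | rfl <;> rcases Sym2.mem_iff.1 hj with hij | hij
    · exact hf hij
    · exact absurd hij (hfg i j)
    · exact absurd hij.symm (hfg j i)
    · exact hg hij
  refine ⟨⟨?_, ?_⟩, ?_⟩
  · simpa [Set.subset_def] using hadj
  · intro e he e' he' hne v hv hv'
    obtain ⟨i, -, rfl⟩ := Finset.mem_image.1 he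
    obtain ⟨j, -, rfl⟩ := Finset.mem_image.1 he'
    exact hne (by rw [eq_of_mem_of_mem v i j hv hv'])
  · refine Finset.card_image_of_injective _ fun i j hij => ?_
    exact eq_of_mem_of_mem (f i) i j (Sym2.mem_mk_left _ _) (hij ▸ Sym2.mem_mk_left _ _)

variable [Fintype σ] [DecidableEq σ]

lemma mem_mVerts {M : Finset (Sym2 σ)} {v : σ} : v ∈ mVerts M ↔ ∃ e ∈ M, v ∈ e := by
  simp [mVerts]

lemma IsMatching.card_le_card_mVerts_inter {M : Finset (Sym2 σ)} {A : Finset σ}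
    (hM : IsMatching G M) (hA : ∀ e ∈ M, ∃ v ∈ A, v ∈ e) : M.card ≤ (mVerts M ∩ A).card := by
  choose f hfA hfe using hA
  rw [← M.card_attach]
  refine Finset.card_le_card_of_injOn (fun e => f e.1 e.2) (fun e _ => ?_) fun e _ e' _ hee' => ?_
  · exact Finset.mem_inter.2 ⟨mem_mVerts.2 ⟨e, e.2, hfe _ _⟩, hfA _ _⟩
  · by_contra hne
    refine hM.2 e.2 e'.2 (Subtype.coe_injective.ne hne) (f e.1 e.2) (hfe _ _) ?_
    exact (show f e.1 e.2 = f e'.1 e'.2 from hee') ▸ hfe _ _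

lemma exists_isKMatching_mVerts_subset_union {A B : Finset σ}
    (hadj : ∀ v ∈ A, ∀ w ∈ B, G.Adj v w) (hA : k ≤ A.card) (hB : k ≤ B.card) :
    ∃ M, IsKMatching G M k ∧ mVerts M ⊆ A ∪ B := by
  rw [← Fintype.card_fin k] at hA hB
  obtain ⟨f, hfA⟩ := Function.Embedding.exists_of_card_le_finset hA
  obtain ⟨g, hgB⟩ := Function.Embedding.exists_of_card_le_finset hB
  have f_adj_g (i j : Fin k) : G.Adj (f i) (g j) := hadj _ (hfA ⟨i, rfl⟩) _ (hgB ⟨j, rfl⟩)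
  refine ⟨_, Fintype.card_fin k ▸ isKMatching_image_pair f.injective g.injective
    (fun i j => (f_adj_g i j).ne) fun i => f_adj_g i i, fun v hv => ?_⟩
  obtain ⟨e, he, hve⟩ := mem_mVerts.1 hv
  obtain ⟨i, -, rfl⟩ := Finset.mem_image.1 he
  rcases Sym2.mem_iff.1 hve with rfl | rfl
  · exact Finset.mem_union_left _ (hfA ⟨i, rfl⟩)
  · exact Finset.mem_union_right _ (hgB ⟨i, rfl⟩)

/-- The complex of the vertex sets that contain no `k`-matching of `G`; its Stanley–Reisner ideal is
the `k`-th squarefree power of the edge ideal of `G`. -/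
def matchingFree (G : SimpleGraph σ) (k : ℕ) : FaceComplex σ where
  carrier := {F | ∀ M, IsKMatching G M k → ¬ mVerts M ⊆ F}
  lower' _ _ hHF hF M hM hMH := hF M hM (hMH.trans hHF)

lemma mem_matchingFree {F : Finset σ} :
    F ∈ matchingFree G k ↔ ∀ M, IsKMatching G M k → ¬ mVerts M ⊆ F :=
  Iff.rfl

lemma notMem_matchingFree {F : Finset σ} :
    F ∉ matchingFree G k ↔ ∃ M, IsKMatching G M k ∧ mVerts M ⊆ F := by
  simp [mem_matchingFree]

lemma matchMon_eq_monomial (K : Type*) [Field K] (M : Finset (Sym2 σ)) :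
    matchMon K M = monomial (Finsupp.indicator (mVerts M) fun _ _ => 1) 1 := by
  rw [Finsupp.indicator_eq_sum_single, monomial_sum_one]
  rfl

theorem matchPow_eq_stanleyReisner (K : Type*) [Field K] (G : SimpleGraph σ) (k : ℕ) :
    matchPow K G k = (matchingFree G k).stanleyReisner K := by
  refine le_antisymm (Ideal.span_le.2 ?_) (stanleyReisner_le fun d hd => ?_)
  · rintro _ ⟨M, hM, rfl⟩
    rw [matchMon_eq_monomial]
    refine monomial_mem_stanleyReisner (notMem_matchingFree.2 ⟨M, hM, fun v hv => ?_⟩)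
    simp [hv]
  · obtain ⟨M, hM, hMd⟩ := notMem_matchingFree.1 hd
    refine Ideal.mem_of_dvd _ ?_ (Ideal.subset_span ⟨M, hM, rfl⟩)
    rw [matchMon_eq_monomial, monomial_dvd_monomial]
    refine ⟨.inr fun v => ?_, dvd_rfl⟩
    by_cases hv : v ∈ mVerts M
    · simpa [hv, Nat.one_le_iff_ne_zero] using hMd hv
    · simp [hv]

end Matching

section CompleteBipartite

open FaceComplex

variable (V W : Type*)

/-- The left part of the vertex set of the complete bipartite graph on `V ⊕ W`. -/
def leftPart [Fintype V] : Finset (V ⊕ W) := Finset.univ.map .inl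

/-- The right part of the vertex set of the complete bipartite graph on `V ⊕ W`. -/
def rightPart [Fintype W] : Finset (V ⊕ W) := Finset.univ.map .inr

lemma card_leftPart [Fintype V] : (leftPart V W).card = Fintype.card V := Finset.card_map _

lemma card_rightPart [Fintype W] : (rightPart V W).card = Fintype.card W := Finset.card_map _

variable [Fintype V] [Fintype W]

lemma isCompl_leftPart_rightPart : IsCompl (leftPart V W) (rightPart V W) where
  disjoint := Finset.disjoint_left.2 (by simp [leftPart, rightPart])
  codisjoint := Finset.codisjoint_left.2 (by simp [leftPart, rightPart])

variable {V W} [DecidableEq V] [DecidableEq W] {k : ℕ}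

lemma exists_isKMatching_completeBipartiteGraph_iff {F : Finset (V ⊕ W)} :
    (∃ M, IsKMatching (completeBipartiteGraph V W) M k ∧ mVerts M ⊆ F) ↔
      k ≤ (F ∩ leftPart V W).card ∧ k ≤ (F ∩ rightPart V W).card := by
  constructor
  · rintro ⟨M, ⟨hM, rfl⟩, hMF⟩
    have card_le (A : Finset (V ⊕ W)) (hA : ∀ e ∈ M, ∃ v ∈ A, v ∈ e) : M.card ≤ (F ∩ A).card :=
      (hM.card_le_card_mVerts_inter hA).trans
        (Finset.card_le_card (Finset.inter_subset_inter_right hMF))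
    refine ⟨card_le _ fun e he => ?_, card_le _ fun e he => ?_⟩ <;>
      have hadj := hM.1 he <;>
      induction e with | _ v w
    · rcases v with v | v <;> rcases w with w | w <;> simp [leftPart] at hadj ⊢
    · rcases v with v | v <;> rcases w with w | w <;> simp [rightPart] at hadj ⊢
  · rintro ⟨hleft, hright⟩
    obtain ⟨M, hM, hMF⟩ := exists_isKMatching_mVerts_subset_union
      (G := completeBipartiteGraph V W) (by simp [leftPart, rightPart]) hleft hright
    exact ⟨M, hM, hMF.trans (Finset.union_subset Finset.inter_subset_left Finset.inter_subset_left)⟩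

lemma matchingFree_completeBipartiteGraph_succ (k : ℕ) :
    matchingFree (completeBipartiteGraph V W) (k + 1) =
      cardLE (leftPart V W) k ⊔ cardLE (rightPart V W) k := by
  ext F
  rw [SetLike.mem_coe, SetLike.mem_coe, ← not_iff_not, notMem_matchingFree,
    exists_isKMatching_completeBipartiteGraph_iff]
  simp

theorem qdepth_matchPow_completeBipartiteGraph_succ (K : Type*) [Field K]
    (hV : k < Fintype.card V) (hW : k < Fintype.card W) :
    qdepth K (matchPow K (completeBipartiteGraph V W) (k + 1)) = 2 * k + 1 := by
  rw [two_mul, matchPow_eq_stanleyReisner, matchingFree_completeBipartiteGraph_succ]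
  rw [← card_leftPart V W] at hV
  rw [← card_rightPart V W] at hW
  exact qdepth_stanleyReisner
    (hasDepth_cardLE_sup_cardLE (isCompl_leftPart_rightPart V W) hV hW) (by simp)

end CompleteBipartite

theorem matchNum_completeBipartiteGraph (V W : Type*) [Fintype V] [Fintype W] :
    matchNum (completeBipartiteGraph V W) = min (Fintype.card V) (Fintype.card W) := by
  classical
  have exists_isKMatching_iff (k : ℕ) : (∃ M, IsKMatching (completeBipartiteGraph V W) M k) ↔
      k ≤ min (Fintype.card V) (Fintype.card W) := by
    simpa [card_leftPart, card_rightPart] using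
      exists_isKMatching_completeBipartiteGraph_iff (V := V) (W := W) (F := Finset.univ) (k := k)
  simp only [matchNum, exists_isKMatching_iff]
  exact isGreatest_Iic.csSup_eq

theorem completeBipartite_min_depth_general (K V W : Type*) [Field K] [Fintype V] [DecidableEq V]
    [Fintype W] [DecidableEq W] :
    matchNum (completeBipartiteGraph V W) = min (Fintype.card V) (Fintype.card W) ∧
    ∀ k : ℕ, 1 ≤ k → k ≤ min (Fintype.card V) (Fintype.card W) →
      qdepth K (matchPow K (completeBipartiteGraph V W) k) = 2 * k - 1 := by
  refine ⟨matchNum_completeBipartiteGraph V W, fun k hk hkVW => ?_⟩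
  obtain ⟨k, rfl⟩ := Nat.exists_eq_add_of_le' hk
  obtain ⟨hV, hW⟩ := le_min_iff.1 hkVW
  rw [qdepth_matchPow_completeBipartiteGraph_succ K hV hW]
  omega

/-- Let `G = K_{m,n}` be the complete bipartite graph. Then
`ν(G) = min(m, n)` and all squarefree powers of `I(G)` have minimum depth:
`depth(S/I(G)^{[k]}) = 2k − 1` for all `1 ≤ k ≤ min(m, n)`. -/
theorem completeBipartite_min_depth {K : Type*} [Field K] (m n : ℕ) :
    matchNum (completeBipartiteGraph (Fin m) (Fin n)) = min m n ∧
    ∀ k : ℕ, 1 ≤ k → k ≤ min m n →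
      qdepth K (matchPow K (completeBipartiteGraph (Fin m) (Fin n)) k)
        = 2 * k - 1 := by
  simpa only [Fintype.card_fin] using completeBipartite_min_depth_general K (Fin m) (Fin n)
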